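/- Let ⟨ω₁, …, ω_{n+2}⟩ be an (n+2)-web of hypersurfaces on U normalized so that ω_{n+1} = −(ω₁ + … + ω_n) and ω_{n+2} = −Σᵢ aᵢ ωᵢ with aᵢ smooth, nonvanishing and aᵢ(x) ≠ aⱼ(x) for i ≠ j, and let Γ be a torsion-free affine connection for which this web is geodesic. Let b₁, …, b_n be smooth nonvanishing functions with bᵢ(x) ≠ bⱼ(x) for i ≠ j such that the 1-form ω = b₁ω₁ + … + b_nω_n is nonvanishing and satisfies ω ∧ dω = 0. Then the foliation defined by ω is totally geodesic for Γ if and only if s^a_{ij} = s^b_{ij} for all i ≠ j. -/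

import Mathlib

open scoped BigOperators

/-- Partial derivative in the `i`-th coordinate direction. -/
noncomputable def pd {n : ℕ} (i : Fin n) (f : (Fin n → ℝ) → ℝ) (x : Fin n → ℝ) : ℝ :=
  fderiv ℝ f x (Pi.single i 1)

/-- A torsion-free affine connection on `U`, given by its Christoffel symbols `Γ k i j`
(smooth on `U` and symmetric in the lower indices `i j`). -/
def IsTorsionFreeConn {n : ℕ} (U : Set (Fin n → ℝ))
    (Γ : Fin n → Fin n → Fin n → (Fin n → ℝ) → ℝ) : Prop :=
  (∀ k i j, ContDiffOn ℝ (⊤ : ℕ∞) (Γ k i j) U) ∧ (∀ k i j x, Γ k i j x = Γ k j i x)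

/-- `γ` is a geodesic of `Γ` on the set `I ⊆ ℝ`, with image in `U`. -/
def IsGeodesicOn {n : ℕ} (U : Set (Fin n → ℝ))
    (Γ : Fin n → Fin n → Fin n → (Fin n → ℝ) → ℝ)
    (I : Set ℝ) (γ : ℝ → Fin n → ℝ) : Prop :=
  (∀ t ∈ I, γ t ∈ U) ∧ ContDiffOn ℝ 2 γ I ∧
    ∀ t ∈ I, ∀ k, deriv (fun s => deriv (fun u => γ u k) s) t +
      ∑ i, ∑ j, Γ k i j (γ t) * deriv (fun u => γ u i) t * deriv (fun u => γ u j) t = 0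

/-- The codimension-one foliation defined by the `1`-form `ω` is totally geodesic for `Γ`:
every geodesic tangent to a leaf at time `0` stays tangent to the kernel of `ω`. -/
def TotallyGeodesic {n : ℕ} (U : Set (Fin n → ℝ))
    (Γ : Fin n → Fin n → Fin n → (Fin n → ℝ) → ℝ)
    (ω : (Fin n → ℝ) → Fin n → ℝ) : Prop :=
  ∀ I : Set ℝ, IsOpen I → I.OrdConnected → (0 : ℝ) ∈ I →
    ∀ γ : ℝ → Fin n → ℝ, IsGeodesicOn U Γ I γ →
      (∑ k, ω (γ 0) k * deriv (fun u => γ u k) 0) = 0 →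
      ∀ t ∈ I, (∑ k, ω (γ t) k * deriv (fun u => γ u k) t) = 0

/-- `ω` is a smooth nonvanishing `1`-form on `U` satisfying the integrability
condition `ω ∧ dω = 0`. -/
def IsFoliationForm {n : ℕ} (U : Set (Fin n → ℝ)) (ω : (Fin n → ℝ) → Fin n → ℝ) : Prop :=
  ContDiffOn ℝ (⊤ : ℕ∞) ω U ∧ (∀ x ∈ U, ω x ≠ 0) ∧
    ∀ x ∈ U, ∀ i j k,
      ω x i * (pd j (fun y => ω y k) x - pd k (fun y => ω y j) x) +
      ω x j * (pd k (fun y => ω y i) x - pd i (fun y => ω y k) x) +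
      ω x k * (pd i (fun y => ω y j) x - pd j (fun y => ω y i) x) = 0

/-- Components of the symmetric covariant differential `d^s_Γ ω`. -/
noncomputable def dsym {n : ℕ} (Γ : Fin n → Fin n → Fin n → (Fin n → ℝ) → ℝ)
    (ω : (Fin n → ℝ) → Fin n → ℝ) (i j : Fin n) (x : Fin n → ℝ) : ℝ :=
  (pd i (fun y => ω y j) x + pd j (fun y => ω y i) x) / 2 - ∑ k, Γ k i j x * ω x k

/-- Components of the symmetric product `θ·ω` of two `1`-forms. -/
noncomputable def symProd {n : ℕ} (θ ω : (Fin n → ℝ) → Fin n → ℝ) (i j : Fin n) (x : Fin n → ℝ) : ℝ :=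
  (θ x i * ω x j + θ x j * ω x i) / 2

/-- A `d`-web of hypersurfaces on `U`: a family of smooth nonvanishing integrable `1`-forms,
any `n` of which are linearly independent at every point of `U`. -/
def IsWeb {n d : ℕ} (U : Set (Fin n → ℝ)) (ωs : Fin d → (Fin n → ℝ) → Fin n → ℝ) : Prop :=
  (∀ i, IsFoliationForm U (ωs i)) ∧
    ∀ x ∈ U, ∀ σ : Fin n → Fin d, Function.Injective σ →
      LinearIndependent ℝ (fun i => ωs (σ i) x)

/-- `Γ` and `Γ'` are projectively equivalent on `U`:
`Γ'ᵏᵢⱼ = Γᵏᵢⱼ + δᵏᵢ ρⱼ + δᵏⱼ ρᵢ` for some smooth `1`-form `ρ`. -/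
def ProjEquiv {n : ℕ} (U : Set (Fin n → ℝ))
    (Γ Γ' : Fin n → Fin n → Fin n → (Fin n → ℝ) → ℝ) : Prop :=
  ∃ ρ : (Fin n → ℝ) → Fin n → ℝ, ContDiffOn ℝ (⊤ : ℕ∞) ρ U ∧
    ∀ x ∈ U, ∀ k i j, Γ' k i j x =
      Γ k i j x + (if k = i then ρ x j else 0) + (if k = j then ρ x i else 0)

/-- `X` is the frame of vector fields dual to the coframe `ωs` on `U`. -/
def IsDualFrame {n : ℕ} (U : Set (Fin n → ℝ)) (ωs : Fin n → (Fin n → ℝ) → Fin n → ℝ)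
    (X : Fin n → (Fin n → ℝ) → Fin n → ℝ) : Prop :=
  (∀ i, ContDiffOn ℝ (⊤ : ℕ∞) (X i) U) ∧
    ∀ x ∈ U, ∀ i j, (∑ k, ωs i x k * X j x k) = if i = j then 1 else 0

/-- The web invariants `s^a_{ij} = (1/(aᵢ−aⱼ))·(aᵢ ∂ⱼ − aⱼ ∂ᵢ) log (aⱼ/aᵢ)`, where `∂ᵢ`
is derivation along the frame vector field `X i`. -/
noncomputable def sInv {n : ℕ} (X : Fin n → (Fin n → ℝ) → Fin n → ℝ)
    (a : Fin n → (Fin n → ℝ) → ℝ) (i j : Fin n) (x : Fin n → ℝ) : ℝ :=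
  (1 / (a i x - a j x)) *
    (a i x * (fderiv ℝ (a j) x (X j x) / a j x - fderiv ℝ (a i) x (X j x) / a i x) -
     a j x * (fderiv ℝ (a j) x (X i x) / a j x - fderiv ℝ (a i) x (X i x) / a i x))

/-- The curvature tensor `Rᵏₗᵢⱼ` of the connection `Γ`. -/
noncomputable def curv {n : ℕ} (Γ : Fin n → Fin n → Fin n → (Fin n → ℝ) → ℝ)
    (k l i j : Fin n) (x : Fin n → ℝ) : ℝ :=
  pd i (Γ k j l) x - pd j (Γ k i l) x +
    ∑ m, (Γ k i m x * Γ m j l x - Γ k j m x * Γ m i l x)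

/-!
For `f = ω(γ̇)` along a geodesic `γ`, the geodesic equation gives `f' = (d^s ω)(γ̇, γ̇)`. Hence if
the foliation of `ω` is totally geodesic, then `d^s ω` vanishes on `ker ω`, every tangent vector
being the velocity of a geodesic. Conversely, if `d^s ω` is the symmetric product of `ω` with a
1-form `θ`, then `f` solves the linear equation `f' = θ(γ̇) f` and vanishes as soon as `f 0 = 0`.

For `ω = ∑ cᵢ ηᵢ`, where the `cᵢ` do not vanish and the foliations of the coframe `ηᵢ` with dual
frame `Xᵢ` are totally geodesic, both conditions amount to the vanishing of `d^s ω` on the vectors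
`cⱼ Xᵢ - cᵢ Xⱼ`. By the Leibniz rule this means that the numerator of `s^c_{ij}` is
`cᵢ σ_{ij} + cⱼ σ_{ji}`, with functions `σ_{ij}` not depending on `c`. If the foliation of `∑ ηᵢ` is
totally geodesic, then `c = 1` gives `σ_{ji} = -σ_{ij}`, so that for distinct `cᵢ` the condition
becomes `s^c_{ij} = σ_{ij}`. Since `c = a` satisfies it, `c = b` does iff `s^b = s^a`.
-/

open Set Filter Topology

section LinearODE

variable {E : Type*} [NormedAddCommGroup E] [NormedSpace ℝ E]

lemma eqOn_zero_of_hasDerivAt_smul {I : Set ℝ} (hI : IsOpen I) (hIc : I.OrdConnected) {t₀ : ℝ}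
    (ht₀ : t₀ ∈ I) {f : ℝ → E} {g : ℝ → ℝ} (hg : ContinuousOn g I)
    (hf : ∀ t ∈ I, HasDerivAt f (g t • f t) t) (hf₀ : f t₀ = 0) : EqOn f 0 I := by
  intro t ht
  obtain ⟨p, hpt, hp⟩ := (hI.eventually_mem (min_rec' (· ∈ I) ht₀ ht)).exists_lt
  obtain ⟨q, htq, hq⟩ := (hI.eventually_mem (max_rec' (· ∈ I) ht₀ ht)).exists_gt
  have hsub : Icc p q ⊆ I := hIc.out hp hq
  obtain ⟨C, hC⟩ := isCompact_Icc.exists_bound_of_continuousOn (hg.mono hsub)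
  have hLip : ∀ s ∈ Ioo p q, LipschitzOnWith C.toNNReal (fun y : E => g s • y) univ := fun s hs =>
    LipschitzOnWith.of_dist_le_mul fun y _ z _ => by
      rw [dist_eq_norm, ← smul_sub, norm_smul, dist_eq_norm]
      gcongr
      exact (hC s (Ioo_subset_Icc_self hs)).trans (Real.le_coe_toNNReal C)
  exact ODE_solution_unique_of_mem_Ioo hLip
    ⟨hpt.trans_le (min_le_left _ _), (le_max_left _ _).trans_lt htq⟩
    (fun s hs => ⟨hf s (hsub (Ioo_subset_Icc_self hs)), mem_univ _⟩)
    (fun s _ => ⟨by simp, mem_univ _⟩) hf₀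
    ⟨hpt.trans_le (min_le_right _ _), (le_max_right _ _).trans_lt htq⟩

end LinearODE

section BilinForm

variable {ι K V : Type*} [Field K] [NeZero (2 : K)] [AddCommGroup V] [Module K V]
  {B : LinearMap.BilinForm K V}

lemma bilinForm_eq_zero_of_self_eq_zero (hB : B.IsSymm) {u v : V} (hu : B u u = 0)
    (hv : B v v = 0) (huv : B (u + v) (u + v) = 0) : B u v = 0 := by
  simp only [map_add, LinearMap.add_apply, hu, hv, hB.eq v u, zero_add, add_zero,
    ← two_mul] at huv
  exact (mul_eq_zero.1 huv).resolve_left two_ne_zero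

lemma bilinForm_sum_smul_self [Fintype ι] (hB : B.IsSymm) {e : ι → V} {c : ι → K}
    (hc : ∀ i, c i ≠ 0)
    (hker : ∀ i j, B (c j • e i - c i • e j) (c j • e i - c i • e j) = 0) (w : ι → K) :
    B (∑ i, w i • e i) (∑ i, w i • e i) =
      (∑ i, B (e i) (e i) / c i * w i) * ∑ i, c i * w i := by
  have hoff : ∀ i j, B (e i) (e j) =
      (B (e i) (e i) / c i * c j + c i * (B (e j) (e j) / c j)) / 2 := by
    intro i j
    have hij := hker i j
    simp only [map_sub, map_smul, LinearMap.sub_apply, LinearMap.smul_apply, smul_eq_mul,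
      hB.eq (e j) (e i)] at hij
    have hi := hc i
    have hj := hc j
    field_simp
    linear_combination -hij
  calc B (∑ i, w i • e i) (∑ i, w i • e i)
      = ∑ i, ∑ j, w i * w j * B (e i) (e j) := by
        simp only [map_sum, map_smul, LinearMap.sum_apply, LinearMap.smul_apply, smul_eq_mul,
          Finset.mul_sum, mul_assoc]
        rw [Finset.sum_comm]
        simp only [mul_left_comm]
    _ = ∑ i, ∑ j, (B (e i) (e i) / c i * w i * (c j * w j) +
          c i * w i * (B (e j) (e j) / c j * w j)) / 2 := by
        refine Finset.sum_congr rfl fun i _ => Finset.sum_congr rfl fun j _ => ?_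
        rw [hoff]
        ring
    _ = (∑ i, B (e i) (e i) / c i * w i) * ∑ i, c i * w i := by
        simp only [← Finset.sum_div, Finset.sum_add_distrib, ← Finset.sum_mul_sum]
        rw [mul_comm (∑ i, c i * w i), add_self_div_two]

end BilinForm

lemma sum_dotProduct_smul_of_dual {ι R : Type*} [Fintype ι] [DecidableEq ι] [CommRing R]
    {η X : ι → ι → R} (h : ∀ i j, ∑ k, η i k * X j k = if i = j then 1 else 0) (v : ι → R) :
    ∑ i, (η i ⬝ᵥ v) • X i = v := by
  have hmul : Matrix.of η * (Matrix.of X).transpose = 1 := by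
    ext i j
    simpa [Matrix.mul_apply, Matrix.one_apply] using h i j
  calc ∑ i, (η i ⬝ᵥ v) • X i
      = (Matrix.of X).transpose.mulVec ((Matrix.of η).mulVec v) := by
        ext l
        simp [Matrix.mulVec, dotProduct, mul_comm]
    _ = v := by rw [Matrix.mulVec_mulVec, mul_eq_one_comm.1 hmul, Matrix.one_mulVec]

section Geodesic

variable {n : ℕ} {U : Set (Fin n → ℝ)} {Γ : Fin n → Fin n → Fin n → (Fin n → ℝ) → ℝ}

/-- The geodesic spray of the connection `Γ`: the vector field on the tangent bundle whose integral
curves are the pairs `(γ, γ̇)` with `γ` a geodesic. -/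
def geodesicSpray (Γ : Fin n → Fin n → Fin n → (Fin n → ℝ) → ℝ)
    (p : (Fin n → ℝ) × (Fin n → ℝ)) : (Fin n → ℝ) × (Fin n → ℝ) :=
  (p.2, fun k => -∑ i, ∑ j, Γ k i j p.1 * p.2 i * p.2 j)

lemma contDiffOn_geodesicSpray {m : WithTop ℕ∞} (hΓ : ∀ k i j, ContDiffOn ℝ m (Γ k i j) U) :
    ContDiffOn ℝ m (geodesicSpray Γ) (U ×ˢ univ) := by
  have hvel : ∀ l, ContDiffOn ℝ m (fun p : (Fin n → ℝ) × (Fin n → ℝ) => p.2 l) (U ×ˢ univ) :=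
    contDiffOn_pi.1 contDiffOn_snd
  have hsymbol : ∀ k i j,
      ContDiffOn ℝ m (fun p : (Fin n → ℝ) × (Fin n → ℝ) => Γ k i j p.1) (U ×ˢ univ) :=
    fun k i j => (hΓ k i j).comp contDiffOn_fst fun p hp => hp.1
  exact contDiffOn_snd.prodMk <| contDiffOn_pi.2 fun k => .neg <| .sum fun i _ => .sum fun j _ =>
    ((hsymbol k i j).mul (hvel i)).mul (hvel j)

lemma isGeodesicOn_fst_of_hasDerivAt_geodesicSpray (hΓ : ∀ k i j, ContinuousOn (Γ k i j) U)
    {I : Set ℝ} (hI : IsOpen I) {α : ℝ → (Fin n → ℝ) × (Fin n → ℝ)}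
    (hαU : ∀ t ∈ I, (α t).1 ∈ U) (hα : ∀ t ∈ I, HasDerivAt α (geodesicSpray Γ (α t)) t) :
    IsGeodesicOn U Γ I fun t => (α t).1 := by
  have hspray : ContinuousOn (geodesicSpray Γ) (U ×ˢ univ) :=
    contDiffOn_zero.1 (contDiffOn_geodesicSpray fun k i j => contDiffOn_zero.2 (hΓ k i j))
  have hpos : ∀ t ∈ I, HasDerivAt (fun s => (α s).1) (α t).2 t := fun t ht => (hα t ht).fst
  have hvel : ∀ k, ∀ t ∈ I, deriv (fun s => (α s).1 k) t = (α t).2 k := fun k t ht =>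
    (hasDerivAt_pi.1 (hpos t ht) k).deriv
  have hα_C1 : ContDiffOn ℝ 1 α I := by
    rw [← zero_add (1 : WithTop ℕ∞), contDiffOn_succ_iff_deriv_of_isOpen hI]
    refine ⟨fun t ht => (hα t ht).differentiableAt.differentiableWithinAt, by simp, ?_⟩
    refine contDiffOn_zero.2 (ContinuousOn.congr (hspray.comp ?_ fun t ht => ⟨hαU t ht, mem_univ _⟩)
      fun t ht => (hα t ht).deriv)
    exact fun t ht => (hα t ht).continuousAt.continuousWithinAt
  refine ⟨hαU, ?_, fun t ht k => ?_⟩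
  · rw [← one_add_one_eq_two, contDiffOn_succ_iff_deriv_of_isOpen hI]
    exact ⟨fun t ht => (hpos t ht).differentiableAt.differentiableWithinAt, by simp,
      hα_C1.snd.congr fun t ht => (hpos t ht).deriv⟩
  · have hacc : deriv (fun s => deriv (fun u => (α u).1 k) s) t = (geodesicSpray Γ (α t)).2 k :=
      ((hasDerivAt_pi.1 (hα t ht).snd k).congr_of_eventuallyEq <|
        eventually_of_mem (hI.mem_nhds ht) (hvel k)).deriv
    simp [hacc, geodesicSpray, hvel _ t ht]

lemma exists_isGeodesicOn (hU : IsOpen U) (hΓ : ∀ k i j, ContDiffOn ℝ 1 (Γ k i j) U)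
    {x : Fin n → ℝ} (hx : x ∈ U) (v : Fin n → ℝ) :
    ∃ ε > (0 : ℝ), ∃ γ : ℝ → Fin n → ℝ, IsGeodesicOn U Γ (Ioo (-ε) ε) γ ∧ γ 0 = x ∧
      ∀ k, deriv (fun t => γ t k) 0 = v k := by
  have hmem : U ×ˢ univ ∈ 𝓝 (x, v) := (hU.prod isOpen_univ).mem_nhds ⟨hx, mem_univ v⟩
  obtain ⟨α, hα₀, δ, hδ, hα⟩ := ((contDiffOn_geodesicSpray hΓ).contDiffAt hmem)
    |>.exists_forall_mem_closedBall_exists_eq_forall_mem_Ioo_hasDerivAt₀ 0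
  simp only [zero_sub, zero_add] at hα
  have hα₀' := hα 0 ⟨neg_lt_zero.2 hδ, hδ⟩
  have hαU : ∀ᶠ t in 𝓝 0, α t ∈ U ×ˢ univ := hα₀'.continuousAt.eventually_mem (hα₀ ▸ hmem)
  obtain ⟨ε, hε, hball⟩ := Metric.eventually_nhds_iff_ball.1
    (hαU.and (isOpen_Ioo.eventually_mem ⟨neg_lt_zero.2 hδ, hδ⟩))
  rw [Real.ball_zero_eq_Ioo] at hball
  refine ⟨ε, hε, fun t => (α t).1, ?_, by simp [hα₀], fun k => ?_⟩
  · exact isGeodesicOn_fst_of_hasDerivAt_geodesicSpray (fun k i j => (hΓ k i j).continuousOn)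
      isOpen_Ioo (fun t ht => (hball t ht).1.1) fun t ht => hα t (hball t ht).2
  · have := (hasDerivAt_pi.1 hα₀'.fst k).deriv
    simpa [hα₀, geodesicSpray] using this

end Geodesic

section SymmetricDifferential

variable {n : ℕ} {U : Set (Fin n → ℝ)} {Γ : Fin n → Fin n → Fin n → (Fin n → ℝ) → ℝ}
  {ω : (Fin n → ℝ) → Fin n → ℝ} {x : Fin n → ℝ}

/-- The symmetric covariant differential `d^s_Γ ω` at the point `x`, as the bilinear form whose
matrix has the entries `dsym Γ ω i j x`. -/
noncomputable def dsymForm (Γ : Fin n → Fin n → Fin n → (Fin n → ℝ) → ℝ)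
    (ω : (Fin n → ℝ) → Fin n → ℝ) (x : Fin n → ℝ) : LinearMap.BilinForm ℝ (Fin n → ℝ) :=
  Matrix.toBilin' (Matrix.of fun i j => dsym Γ ω i j x)

lemma dsymForm_apply (u v : Fin n → ℝ) :
    dsymForm Γ ω x u v = ∑ i, ∑ j, u i * dsym Γ ω i j x * v j := by
  simp [dsymForm, Matrix.toBilin'_apply]

lemma isSymm_dsymForm (hΓ : ∀ k i j, Γ k i j x = Γ k j i x) : (dsymForm Γ ω x).IsSymm :=
  Matrix.isSymm_toBilin'_iff_isSymm.2 <| Matrix.IsSymm.ext fun i j => by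
    simp only [Matrix.of_apply, dsym, hΓ _ i j, add_comm]

lemma fderiv_apply_eq_sum_pd (f : (Fin n → ℝ) → ℝ) (x v : Fin n → ℝ) :
    fderiv ℝ f x v = ∑ i, v i * pd i f x := by
  conv_lhs => rw [pi_eq_sum_univ' v]
  simp [pd]

lemma dsymForm_self (v : Fin n → ℝ) :
    dsymForm Γ ω x v v = ∑ k, fderiv ℝ (fun y => ω y k) x v * v k -
      ∑ k, ω x k * ∑ i, ∑ j, Γ k i j x * v i * v j := by
  have hpd : ∑ k, fderiv ℝ (fun y => ω y k) x v * v k =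
      ∑ i, ∑ j, v i * ((pd i (fun y => ω y j) x + pd j (fun y => ω y i) x) / 2) * v j := by
    have hswap : ∑ i, ∑ j, v i * pd j (fun y => ω y i) x * v j =
        ∑ i, ∑ j, v i * pd i (fun y => ω y j) x * v j := by
      rw [Finset.sum_comm]
      exact Finset.sum_congr rfl fun i _ => Finset.sum_congr rfl fun j _ => by ring
    simp only [mul_div_assoc', div_mul_eq_mul_div, ← Finset.sum_div, mul_add, add_mul,
      Finset.sum_add_distrib, hswap, add_self_div_two, fderiv_apply_eq_sum_pd, Finset.sum_mul]
    exact Finset.sum_comm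
  have hΓ : ∑ k, ω x k * ∑ i, ∑ j, Γ k i j x * v i * v j =
      ∑ i, ∑ j, v i * (∑ k, Γ k i j x * ω x k) * v j := by
    simp only [Finset.mul_sum, Finset.sum_mul]
    rw [Finset.sum_comm]
    refine Finset.sum_congr rfl fun i _ => Finset.sum_comm.trans ?_
    exact Finset.sum_congr rfl fun j _ => Finset.sum_congr rfl fun k _ => by ring
  simp only [dsymForm_apply, dsym, hpd, hΓ, mul_sub, sub_mul, Finset.sum_sub_distrib]

lemma continuousOn_dsymForm_apply (hU : IsOpen U) (hΓ : ∀ k i j, ContinuousOn (Γ k i j) U)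
    (hω : ContDiffOn ℝ 1 ω U) {X Y : (Fin n → ℝ) → Fin n → ℝ} (hX : ContinuousOn X U)
    (hY : ContinuousOn Y U) : ContinuousOn (fun x => dsymForm Γ ω x (X x) (Y x)) U := by
  have hω_k := contDiffOn_pi.1 hω
  have hpd : ∀ i k, ContinuousOn (pd i fun y => ω y k) U := fun i k =>
    ((hω_k k).continuousOn_fderiv_of_isOpen hU le_rfl).clm_apply continuousOn_const
  have hdsym : ∀ i j, ContinuousOn (dsym Γ ω i j) U := fun i j =>
    (((hpd i j).add (hpd j i)).div_const 2).sub <|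
      continuousOn_finsetSum _ fun k _ => (hΓ k i j).mul (hω_k k).continuousOn
  simp only [dsymForm_apply]
  exact continuousOn_finsetSum _ fun i _ => continuousOn_finsetSum _ fun j _ =>
    ((continuousOn_pi.1 hX i).mul (hdsym i j)).mul (continuousOn_pi.1 hY j)

lemma pd_sum_mul {ι : Type*} [Fintype ι] {c f : ι → (Fin n → ℝ) → ℝ}
    (hc : ∀ m, DifferentiableAt ℝ (c m) x) (hf : ∀ m, DifferentiableAt ℝ (f m) x) (i : Fin n) :
    pd i (fun y => ∑ m, c m y * f m y) x = ∑ m, (c m x * pd i (f m) x + pd i (c m) x * f m x) := by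
  simp only [pd]
  rw [fderiv_fun_sum fun m _ => (hc m).fun_mul (hf m), sum_apply]
  refine Finset.sum_congr rfl fun m _ => ?_
  rw [fderiv_fun_mul (hc m) (hf m)]
  simp [mul_comm]

lemma dsym_sum_mul {ι : Type*} [Fintype ι] {c : ι → (Fin n → ℝ) → ℝ}
    {η : ι → (Fin n → ℝ) → Fin n → ℝ} (hc : ∀ m, DifferentiableAt ℝ (c m) x)
    (hη : ∀ m, DifferentiableAt ℝ (η m) x) (i j : Fin n) :
    dsym Γ (fun y k => ∑ m, c m y * η m y k) i j x =
      ∑ m, (c m x * dsym Γ (η m) i j x + symProd (fun y k => pd k (c m) y) (η m) i j x) := by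
  have hη_k : ∀ k m, DifferentiableAt ℝ (fun y => η m y k) x := fun k m =>
    differentiableAt_pi.1 (hη m) k
  have hΓ_sum : ∑ k, Γ k i j x * ∑ m, c m x * η m x k =
      ∑ m, c m x * ∑ k, Γ k i j x * η m x k := by
    simp only [Finset.mul_sum, mul_left_comm (c _ x)]
    exact Finset.sum_comm
  simp only [dsym, symProd, pd_sum_mul hc (hη_k _), hΓ_sum, ← Finset.sum_add_distrib,
    Finset.sum_div, ← Finset.sum_sub_distrib]
  exact Finset.sum_congr rfl fun m _ => by ring

lemma sum_mul_symProd_mul (θ ω : (Fin n → ℝ) → Fin n → ℝ) (x u v : Fin n → ℝ) :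
    ∑ i, ∑ j, u i * symProd θ ω i j x * v j =
      ((θ x ⬝ᵥ u) * (ω x ⬝ᵥ v) + (θ x ⬝ᵥ v) * (ω x ⬝ᵥ u)) / 2 := by
  rw [mul_comm (θ x ⬝ᵥ v)]
  simp only [dotProduct, Finset.sum_mul_sum, ← Finset.sum_add_distrib, Finset.sum_div]
  exact Finset.sum_congr rfl fun i _ => Finset.sum_congr rfl fun j _ => by rw [symProd]; ring

lemma dsymForm_sum_mul {ι : Type*} [Fintype ι] {c : ι → (Fin n → ℝ) → ℝ}
    {η : ι → (Fin n → ℝ) → Fin n → ℝ} (hc : ∀ m, DifferentiableAt ℝ (c m) x)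
    (hη : ∀ m, DifferentiableAt ℝ (η m) x) (u v : Fin n → ℝ) :
    dsymForm Γ (fun y k => ∑ m, c m y * η m y k) x u v =
      ∑ m, (c m x * dsymForm Γ (η m) x u v +
        (fderiv ℝ (c m) x u * (η m x ⬝ᵥ v) + fderiv ℝ (c m) x v * (η m x ⬝ᵥ u)) / 2) := by
  have hdc : ∀ m w, fderiv ℝ (c m) x w = (fun k => pd k (c m) x) ⬝ᵥ w := fun m w => by
    rw [fderiv_apply_eq_sum_pd, dotProduct_comm, dotProduct]
  calc dsymForm Γ (fun y k => ∑ m, c m y * η m y k) x u v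
      = ∑ i, ∑ j, ∑ m, (c m x * (u i * dsym Γ (η m) i j x * v j) +
          u i * symProd (fun y k => pd k (c m) y) (η m) i j x * v j) := by
        simp only [dsymForm_apply, dsym_sum_mul hc hη, Finset.mul_sum, Finset.sum_mul]
        refine Finset.sum_congr rfl fun i _ => Finset.sum_congr rfl fun j _ =>
          Finset.sum_congr rfl fun m _ => ?_
        ring
    _ = ∑ m, ∑ i, ∑ j, (c m x * (u i * dsym Γ (η m) i j x * v j) +
          u i * symProd (fun y k => pd k (c m) y) (η m) i j x * v j) :=
        (Finset.sum_congr rfl fun i _ => Finset.sum_comm).trans Finset.sum_comm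
    _ = _ := by
        simp only [Finset.sum_add_distrib, ← Finset.mul_sum, sum_mul_symProd_mul, hdc,
          dsymForm_apply]

end SymmetricDifferential

section TotallyGeodesic

variable {n : ℕ} {U : Set (Fin n → ℝ)} {Γ : Fin n → Fin n → Fin n → (Fin n → ℝ) → ℝ}
  {ω : (Fin n → ℝ) → Fin n → ℝ}

lemma IsGeodesicOn.hasDerivAt_dotProduct_velocity {I : Set ℝ} (hI : IsOpen I)
    {γ : ℝ → Fin n → ℝ} (hγ : IsGeodesicOn U Γ I γ) {t : ℝ} (ht : t ∈ I)
    (hω : DifferentiableAt ℝ ω (γ t)) :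
    HasDerivAt (fun s => ω (γ s) ⬝ᵥ fun k => deriv (fun r => γ r k) s)
      (dsymForm Γ ω (γ t) (fun k => deriv (fun r => γ r k) t) fun k => deriv (fun r => γ r k) t)
      t := by
  obtain ⟨-, hγ_C2, hgeo⟩ := hγ
  have hγ_k : ∀ k, ContDiffOn ℝ 2 (fun s => γ s k) I := contDiffOn_pi.1 hγ_C2
  have hvel : ∀ k, HasDerivAt (fun s => γ s k) (deriv (fun s => γ s k) t) t := fun k =>
    (((hγ_k k).contDiffAt (hI.mem_nhds ht)).differentiableAt two_ne_zero).hasDerivAt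
  have hacc : ∀ k, HasDerivAt (fun s => deriv (fun r => γ r k) s)
      (-∑ i, ∑ j, Γ k i j (γ t) * deriv (fun r => γ r i) t * deriv (fun r => γ r j) t) t := by
    intro k
    rw [← eq_neg_of_add_eq_zero_left (hgeo t ht k)]
    exact ((((hγ_k k).deriv_of_isOpen hI one_add_one_eq_two.le).contDiffAt
      (hI.mem_nhds ht)).differentiableAt one_ne_zero).hasDerivAt
  have hform : ∀ k, HasDerivAt (fun s => ω (γ s) k)
      (fderiv ℝ (fun y => ω y k) (γ t) fun k => deriv (fun s => γ s k) t) t := fun k =>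
    (differentiableAt_pi.1 hω k).hasFDerivAt.comp_hasDerivAt t (hasDerivAt_pi.2 hvel)
  refine (HasDerivAt.fun_sum fun k (_ : k ∈ Finset.univ) =>
    (hform k).fun_mul (hacc k)).congr_deriv ?_
  simp only [dsymForm_self, Finset.sum_add_distrib, mul_neg, Finset.sum_neg_distrib,
    sub_eq_add_neg]

lemma TotallyGeodesic.congr_ker {ω' : (Fin n → ℝ) → Fin n → ℝ} (h : TotallyGeodesic U Γ ω)
    (hker : ∀ x ∈ U, ∀ v, ω' x ⬝ᵥ v = 0 ↔ ω x ⬝ᵥ v = 0) : TotallyGeodesic U Γ ω' :=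
  fun I hI hIc h0 γ hγ hγ0 t ht => (hker _ (hγ.1 t ht) _).2 <|
    h I hI hIc h0 γ hγ ((hker _ (hγ.1 0 h0) _).1 hγ0) t ht

lemma TotallyGeodesic.of_eq_neg {ω' : (Fin n → ℝ) → Fin n → ℝ} (h : TotallyGeodesic U Γ ω)
    (heq : ∀ x ∈ U, ∀ k, ω x k = -ω' x k) : TotallyGeodesic U Γ ω' :=
  h.congr_ker fun x hx v => by rw [show ω x = -ω' x from funext (heq x hx), neg_dotProduct,
    neg_eq_zero]

lemma TotallyGeodesic.dsymForm_self_eq_zero (h : TotallyGeodesic U Γ ω) (hU : IsOpen U)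
    (hΓ : ∀ k i j, ContDiffOn ℝ 1 (Γ k i j) U) {x : Fin n → ℝ} (hx : x ∈ U)
    (hω : DifferentiableAt ℝ ω x) {v : Fin n → ℝ} (hv : ω x ⬝ᵥ v = 0) :
    dsymForm Γ ω x v v = 0 := by
  obtain ⟨ε, hε, γ, hγ, rfl, hγ'⟩ := exists_isGeodesicOn hU hΓ hx v
  obtain rfl : (fun k => deriv (fun t => γ t k) 0) = v := funext hγ'
  have h0 : (0 : ℝ) ∈ Ioo (-ε) ε := ⟨neg_lt_zero.2 hε, hε⟩
  have htangent : (fun s => ω (γ s) ⬝ᵥ fun k => deriv (fun r => γ r k) s) =ᶠ[𝓝 0] fun _ => 0 :=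
    eventually_of_mem (isOpen_Ioo.mem_nhds h0) (h _ isOpen_Ioo ordConnected_Ioo h0 γ hγ hv)
  exact (hγ.hasDerivAt_dotProduct_velocity isOpen_Ioo h0 hω).unique <|
    (hasDerivAt_const 0 0).congr_of_eventuallyEq htangent

lemma TotallyGeodesic.dsymForm_eq_zero (h : TotallyGeodesic U Γ ω) (hU : IsOpen U)
    (hΓ : IsTorsionFreeConn U Γ) {x : Fin n → ℝ} (hx : x ∈ U) (hω : DifferentiableAt ℝ ω x)
    {u v : Fin n → ℝ} (hu : ω x ⬝ᵥ u = 0) (hv : ω x ⬝ᵥ v = 0) : dsymForm Γ ω x u v = 0 := by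
  have hself : ∀ {w}, ω x ⬝ᵥ w = 0 → dsymForm Γ ω x w w = 0 :=
    h.dsymForm_self_eq_zero hU (fun k i j => (hΓ.1 k i j).of_le (by simp)) hx hω
  exact bilinForm_eq_zero_of_self_eq_zero (isSymm_dsymForm fun k i j => hΓ.2 k i j x)
    (hself hu) (hself hv) (hself (by rw [dotProduct_add, hu, hv, add_zero]))

lemma totallyGeodesic_of_dsymForm_self_eq_mul {θ : (Fin n → ℝ) → Fin n → ℝ}
    (hθ : ContinuousOn θ U) (hω : ∀ x ∈ U, DifferentiableAt ℝ ω x)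
    (h : ∀ x ∈ U, ∀ v, dsymForm Γ ω x v v = (θ x ⬝ᵥ v) * (ω x ⬝ᵥ v)) :
    TotallyGeodesic U Γ ω := by
  intro I hI hIc h0 γ hγ hγ0 t ht
  have hθ_vel : ContinuousOn (fun t => θ (γ t) ⬝ᵥ fun k => deriv (fun s => γ s k) t) I :=
    continuousOn_finsetSum _ fun k _ =>
      (continuousOn_pi.1 (hθ.comp hγ.2.1.continuousOn hγ.1) k).mul
        ((contDiffOn_pi.1 hγ.2.1 k).continuousOn_deriv_of_isOpen hI one_le_two)
  have hODE : ∀ s ∈ I, HasDerivAt (fun s => ω (γ s) ⬝ᵥ fun k => deriv (fun r => γ r k) s)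
      ((θ (γ s) ⬝ᵥ fun k => deriv (fun r => γ r k) s) •
        (ω (γ s) ⬝ᵥ fun k => deriv (fun r => γ r k) s)) s := fun s hs => by
    rw [smul_eq_mul, ← h (γ s) (hγ.1 s hs)]
    exact hγ.hasDerivAt_dotProduct_velocity hI hs (hω _ (hγ.1 s hs))
  exact eqOn_zero_of_hasDerivAt_smul hI hIc h0 hθ_vel hODE hγ0 ht

end TotallyGeodesic

lemma sum_mul_dotProduct {ι κ R : Type*} [Fintype ι] [Fintype κ] [NonUnitalSemiring R] (c : ι → R)
    (η : ι → κ → R) (v : κ → R) : (fun k => ∑ m, c m * η m k) ⬝ᵥ v = ∑ m, c m * (η m ⬝ᵥ v) := by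
  simp only [dotProduct, Finset.sum_mul, Finset.mul_sum, mul_assoc]
  exact Finset.sum_comm

lemma contDiffOn_sum_mul {𝕜 E ι κ : Type*} [NontriviallyNormedField 𝕜] [NormedAddCommGroup E]
    [NormedSpace 𝕜 E] [Fintype ι] [Fintype κ] {m : WithTop ℕ∞} {s : Set E} {c : ι → E → 𝕜}
    {η : ι → E → κ → 𝕜} (hc : ∀ i, ContDiffOn 𝕜 m (c i) s) (hη : ∀ i, ContDiffOn 𝕜 m (η i) s) :
    ContDiffOn 𝕜 m (fun x k => ∑ i, c i x * η i x k) s :=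
  contDiffOn_pi.2 fun k => .sum fun i _ => (hc i).mul (contDiffOn_pi.1 (hη i) k)

section Coframe

variable {n : ℕ} {U : Set (Fin n → ℝ)} {Γ : Fin n → Fin n → Fin n → (Fin n → ℝ) → ℝ}
  {η X : Fin n → (Fin n → ℝ) → Fin n → ℝ} {c : Fin n → (Fin n → ℝ) → ℝ} {x : Fin n → ℝ}

lemma IsDualFrame.sum_mul_dotProduct_frame (hX : IsDualFrame U η X) (hx : x ∈ U)
    (c : Fin n → (Fin n → ℝ) → ℝ) (j : Fin n) :
    (fun k => ∑ m, c m x * η m x k) ⬝ᵥ X j x = c j x := by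
  rw [sum_mul_dotProduct (c · x) (η · x)]
  simp [dotProduct, hX.2 x hx]

theorem totallyGeodesic_sum_mul_iff (hU : IsOpen U) (hΓ : IsTorsionFreeConn U Γ)
    (hX : IsDualFrame U η X) (hη : ∀ i, ContDiffOn ℝ 1 (η i) U)
    (hc : ∀ i, ContDiffOn ℝ 1 (c i) U) (hc0 : ∀ i, ∀ x ∈ U, c i x ≠ 0) :
    TotallyGeodesic U Γ (fun x k => ∑ m, c m x * η m x k) ↔
      ∀ i j, i ≠ j → ∀ x ∈ U, dsymForm Γ (fun x k => ∑ m, c m x * η m x k) x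
        (c j x • X i x - c i x • X j x) (c j x • X i x - c i x • X j x) = 0 := by
  have hω := contDiffOn_sum_mul hc hη
  have hωd : ∀ x ∈ U, DifferentiableAt ℝ (fun x k => ∑ m, c m x * η m x k) x := fun x hx =>
    (hω.contDiffAt (hU.mem_nhds hx)).differentiableAt one_ne_zero
  set ω : (Fin n → ℝ) → Fin n → ℝ := fun x k => ∑ m, c m x * η m x k
  constructor
  · intro h i j _ x hx
    refine h.dsymForm_self_eq_zero hU (fun k i j => (hΓ.1 k i j).of_le (by simp)) hx (hωd x hx) ?_
    simp only [dotProduct_sub, dotProduct_smul, hX.sum_mul_dotProduct_frame hx c, ω, smul_eq_mul]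
    ring
  · intro h
    have hker : ∀ x ∈ U, ∀ i j, dsymForm Γ ω x
        (c j x • X i x - c i x • X j x) (c j x • X i x - c i x • X j x) = 0 := by
      intro x hx i j
      rcases eq_or_ne i j with rfl | hij
      · simp
      · exact h i j hij x hx
    have hθ : ContinuousOn
        (fun x => ∑ i, (dsymForm Γ ω x (X i x) (X i x) / c i x) • η i x) U :=
      continuousOn_finsetSum _ fun i _ =>
        ((continuousOn_dsymForm_apply hU (fun k i j => (hΓ.1 k i j).continuousOn) hω
          (hX.1 i).continuousOn (hX.1 i).continuousOn).div (hc i).continuousOn (hc0 i)).smul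
        (hη i).continuousOn
    refine totallyGeodesic_of_dsymForm_self_eq_mul hθ hωd fun x hx v => ?_
    have hself := bilinForm_sum_smul_self (isSymm_dsymForm (ω := ω) fun k i j => hΓ.2 k i j x)
      (fun i => hc0 i x hx) (hker x hx) fun i => η i x ⬝ᵥ v
    simpa only [sum_dotProduct_smul_of_dual (hX.2 x hx), sum_dotProduct, smul_dotProduct,
      smul_eq_mul, ω, sum_mul_dotProduct] using hself

/-- The numerator `(cᵢ ∂ⱼ − cⱼ ∂ᵢ) log (cⱼ/cᵢ)` of the web invariant `sInv X c i j`. Unlike `sInv`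
it also makes sense where `cᵢ = cⱼ`, in particular for the constant coefficients `1`. -/
noncomputable def sInvNum (X : Fin n → (Fin n → ℝ) → Fin n → ℝ) (c : Fin n → (Fin n → ℝ) → ℝ)
    (i j : Fin n) (x : Fin n → ℝ) : ℝ :=
  c i x * (fderiv ℝ (c j) x (X j x) / c j x - fderiv ℝ (c i) x (X j x) / c i x) -
    c j x * (fderiv ℝ (c j) x (X i x) / c j x - fderiv ℝ (c i) x (X i x) / c i x)

lemma sInv_eq_iff {i j : Fin n} (hij : c i x ≠ c j x) {s : ℝ} :
    sInv X c i j x = s ↔ sInvNum X c i j x = (c i x - c j x) * s := by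
  rw [sInv, one_div, inv_mul_eq_iff_eq_mul₀ (sub_ne_zero.2 hij), sInvNum]

/-- The function `2 (d^s ηᵢ)(Xᵢ, Xⱼ) − (d^s ηⱼ)(Xⱼ, Xⱼ)` of a coframe `η` with dual frame `X`. When
the foliations of all the `ηᵢ` and of `∑ ηᵢ` are totally geodesic, it is the value of `sInv X c i j`
for every `c` such that the foliation of `∑ cᵢ ηᵢ` is totally geodesic as well. -/
noncomputable def connInv (Γ : Fin n → Fin n → Fin n → (Fin n → ℝ) → ℝ)
    (η X : Fin n → (Fin n → ℝ) → Fin n → ℝ) (i j : Fin n) (x : Fin n → ℝ) : ℝ :=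
  2 * dsymForm Γ (η i) x (X i x) (X j x) - dsymForm Γ (η j) x (X j x) (X j x)

section DualFrame

variable (hX : IsDualFrame U η X) (hx : x ∈ U)
  (hvanish : ∀ m p q, m ≠ p → m ≠ q → dsymForm Γ (η m) x (X p x) (X q x) = 0)
  (hc : ∀ m, DifferentiableAt ℝ (c m) x) (hη : ∀ m, DifferentiableAt ℝ (η m) x)

include hX hx hvanish hc hη

lemma dsymForm_sum_mul_frame_self (p : Fin n) :
    dsymForm Γ (fun y k => ∑ m, c m y * η m y k) x (X p x) (X p x) =
      c p x * dsymForm Γ (η p) x (X p x) (X p x) + fderiv ℝ (c p) x (X p x) := by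
  rw [dsymForm_sum_mul hc hη]
  simp only [dotProduct, hX.2 x hx, add_self_div_two]
  rw [Finset.sum_eq_single p (fun m _ hm => by simp [hvanish m p p hm hm, hm]) (by simp)]
  simp

lemma dsymForm_sum_mul_frame_of_ne {p q : Fin n} (hpq : p ≠ q) :
    dsymForm Γ (fun y k => ∑ m, c m y * η m y k) x (X p x) (X q x) =
      c p x * dsymForm Γ (η p) x (X p x) (X q x) + c q x * dsymForm Γ (η q) x (X p x) (X q x) +
        (fderiv ℝ (c q) x (X p x) + fderiv ℝ (c p) x (X q x)) / 2 := by
  rw [dsymForm_sum_mul hc hη]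
  simp only [dotProduct, hX.2 x hx]
  rw [Finset.sum_eq_add p q hpq (fun m _ hm => by simp [hvanish m p q hm.1 hm.2, hm.1, hm.2])
    (by simp) (by simp)]
  simp only [if_pos, if_neg hpq, if_neg hpq.symm, mul_one, mul_zero, add_zero, zero_add, add_div]
  ring

lemma dsymForm_sum_mul_sub_smul_self (hΓ : ∀ k i j, Γ k i j x = Γ k j i x) {i j : Fin n}
    (hij : i ≠ j) (hi : c i x ≠ 0) (hj : c j x ≠ 0) :
    dsymForm Γ (fun y k => ∑ m, c m y * η m y k) x
        (c j x • X i x - c i x • X j x) (c j x • X i x - c i x • X j x) =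
      c i x * c j x *
        (sInvNum X c i j x - (c i x * connInv Γ η X i j x + c j x * connInv Γ η X j i x)) := by
  have hsymm : ∀ (ω : (Fin n → ℝ) → Fin n → ℝ) (u v : Fin n → ℝ),
      dsymForm Γ ω x v u = dsymForm Γ ω x u v := fun ω u v => (isSymm_dsymForm hΓ).eq v u
  simp only [map_sub, map_smul, LinearMap.sub_apply, LinearMap.smul_apply, smul_eq_mul,
    hsymm _ (X i x) (X j x), dsymForm_sum_mul_frame_self hX hx hvanish hc hη,
    dsymForm_sum_mul_frame_of_ne hX hx hvanish hc hη hij, sInvNum, connInv]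
  field_simp
  ring

end DualFrame

theorem totallyGeodesic_sum_mul_iff_sInvNum (hU : IsOpen U) (hΓ : IsTorsionFreeConn U Γ)
    (hX : IsDualFrame U η X) (hη : ∀ i, ContDiffOn ℝ 1 (η i) U)
    (hgeo : ∀ i, TotallyGeodesic U Γ (η i))
    (hc : ∀ i, ContDiffOn ℝ 1 (c i) U) (hc0 : ∀ i, ∀ x ∈ U, c i x ≠ 0) :
    TotallyGeodesic U Γ (fun x k => ∑ m, c m x * η m x k) ↔ ∀ i j, i ≠ j → ∀ x ∈ U,
      sInvNum X c i j x = c i x * connInv Γ η X i j x + c j x * connInv Γ η X j i x := by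
  rw [totallyGeodesic_sum_mul_iff hU hΓ hX hη hc hc0]
  refine forall₅_congr fun i j hij x hx => ?_
  have hηd : ∀ m, DifferentiableAt ℝ (η m) x := fun m =>
    ((hη m).contDiffAt (hU.mem_nhds hx)).differentiableAt one_ne_zero
  have hcd : ∀ m, DifferentiableAt ℝ (c m) x := fun m =>
    ((hc m).contDiffAt (hU.mem_nhds hx)).differentiableAt one_ne_zero
  have hker : ∀ m p, m ≠ p → η m x ⬝ᵥ X p x = 0 := fun m p hmp =>
    (hX.2 x hx m p).trans (if_neg hmp)
  have hvanish : ∀ m p q, m ≠ p → m ≠ q → dsymForm Γ (η m) x (X p x) (X q x) = 0 :=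
    fun m p q hp hq => (hgeo m).dsymForm_eq_zero hU hΓ hx (hηd m) (hker m p hp) (hker m q hq)
  rw [dsymForm_sum_mul_sub_smul_self hX hx hvanish hcd hηd (fun k i j => hΓ.2 k i j x) hij
    (hc0 i x hx) (hc0 j x hx), mul_eq_zero_iff_left (mul_ne_zero (hc0 i x hx) (hc0 j x hx)),
    sub_eq_zero]

lemma connInv_swap (hU : IsOpen U) (hΓ : IsTorsionFreeConn U Γ)
    (hX : IsDualFrame U η X) (hη : ∀ i, ContDiffOn ℝ 1 (η i) U)
    (hgeo : ∀ i, TotallyGeodesic U Γ (η i))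
    (hsum : TotallyGeodesic U Γ fun x k => ∑ i, η i x k) {i j : Fin n} (hij : i ≠ j)
    (hx : x ∈ U) : connInv Γ η X j i x = -connInv Γ η X i j x := by
  have h := (totallyGeodesic_sum_mul_iff_sInvNum (c := fun _ _ => 1) hU hΓ hX hη hgeo
    (fun _ => contDiffOn_const) fun _ _ _ => one_ne_zero).1 (by simpa using hsum) i j hij x hx
  simp only [sInvNum, fderiv_fun_const, Pi.zero_apply, zero_apply, zero_div, sub_self, mul_zero,
    one_mul] at h
  exact eq_neg_of_add_eq_zero_right h.symm

theorem totallyGeodesic_sum_mul_iff_sInv (hU : IsOpen U) (hΓ : IsTorsionFreeConn U Γ)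
    (hX : IsDualFrame U η X) (hη : ∀ i, ContDiffOn ℝ 1 (η i) U)
    (hgeo : ∀ i, TotallyGeodesic U Γ (η i))
    (hsum : TotallyGeodesic U Γ fun x k => ∑ i, η i x k)
    (hc : ∀ i, ContDiffOn ℝ 1 (c i) U) (hc0 : ∀ i, ∀ x ∈ U, c i x ≠ 0)
    (hcne : ∀ i j, i ≠ j → ∀ x ∈ U, c i x ≠ c j x) :
    TotallyGeodesic U Γ (fun x k => ∑ m, c m x * η m x k) ↔
      ∀ i j, i ≠ j → ∀ x ∈ U, sInv X c i j x = connInv Γ η X i j x := by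
  rw [totallyGeodesic_sum_mul_iff_sInvNum hU hΓ hX hη hgeo hc hc0]
  refine forall₅_congr fun i j hij x hx => ?_
  rw [sInv_eq_iff (hcne i j hij x hx), connInv_swap hU hΓ hX hη hgeo hsum hij hx, mul_neg,
    ← sub_eq_add_neg, ← sub_mul]

theorem statement12_general (hU : IsOpen U) (hΓ : IsTorsionFreeConn U Γ)
    (hX : IsDualFrame U η X) (hη : ∀ i, ContDiffOn ℝ 1 (η i) U)
    (hgeo : ∀ i, TotallyGeodesic U Γ (η i))
    (hsum : TotallyGeodesic U Γ fun x k => ∑ i, η i x k)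
    {a b : Fin n → (Fin n → ℝ) → ℝ}
    (ha : ∀ i, ContDiffOn ℝ 1 (a i) U) (ha0 : ∀ i, ∀ x ∈ U, a i x ≠ 0)
    (hane : ∀ i j, i ≠ j → ∀ x ∈ U, a i x ≠ a j x)
    (hgeo_a : TotallyGeodesic U Γ fun x k => ∑ i, a i x * η i x k)
    (hb : ∀ i, ContDiffOn ℝ 1 (b i) U) (hb0 : ∀ i, ∀ x ∈ U, b i x ≠ 0)
    (hbne : ∀ i j, i ≠ j → ∀ x ∈ U, b i x ≠ b j x) :
    TotallyGeodesic U Γ (fun x k => ∑ i, b i x * η i x k) ↔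
      ∀ i j, i ≠ j → ∀ x ∈ U, sInv X a i j x = sInv X b i j x := by
  have hs := (totallyGeodesic_sum_mul_iff_sInv hU hΓ hX hη hgeo hsum ha ha0 hane).1 hgeo_a
  rw [totallyGeodesic_sum_mul_iff_sInv hU hΓ hX hη hgeo hsum hb hb0 hbne]
  exact forall₅_congr fun i j hij x hx => by rw [hs i j hij x hx, eq_comm]

end Coframe

/-- for a normalized geodesic `(n+2)`-web and a foliation given by
`ω = b₁ω₁ + … + b_nω_n`, the foliation of `ω` is totally geodesic for the web connection
iff `s^a_{ij} = s^b_{ij}` for all `i ≠ j`. -/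
theorem statement12 {n : ℕ} (hn : 2 ≤ n)
    (U : Set (Fin n → ℝ)) (hU : IsOpen U) (hUconn : IsConnected U)
    (ωs : Fin (n + 2) → (Fin n → ℝ) → Fin n → ℝ) (hweb : IsWeb U ωs)
    (X : Fin n → (Fin n → ℝ) → Fin n → ℝ)
    (hX : IsDualFrame U (fun i => ωs (Fin.castLE (by omega) i)) X)
    (a : Fin n → (Fin n → ℝ) → ℝ)
    (hasm : ∀ i, ContDiffOn ℝ (⊤ : ℕ∞) (a i) U)
    (hanz : ∀ i, ∀ x ∈ U, a i x ≠ 0)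
    (hane : ∀ i j, i ≠ j → ∀ x ∈ U, a i x ≠ a j x)
    (hnorm1 : ∀ x ∈ U, ∀ m, ωs (⟨n, by omega⟩ : Fin (n + 2)) x m =
      -(∑ i : Fin n, ωs (Fin.castLE (by omega) i) x m))
    (hnorm2 : ∀ x ∈ U, ∀ m, ωs (⟨n + 1, by omega⟩ : Fin (n + 2)) x m =
      -(∑ i : Fin n, a i x * ωs (Fin.castLE (by omega) i) x m))
    (Γ : Fin n → Fin n → Fin n → (Fin n → ℝ) → ℝ)
    (hΓ : IsTorsionFreeConn U Γ)
    (hg : ∀ i, TotallyGeodesic U Γ (ωs i))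
    (b : Fin n → (Fin n → ℝ) → ℝ)
    (hbsm : ∀ i, ContDiffOn ℝ (⊤ : ℕ∞) (b i) U)
    (hbnz : ∀ i, ∀ x ∈ U, b i x ≠ 0)
    (hbne : ∀ i j, i ≠ j → ∀ x ∈ U, b i x ≠ b j x)
    (hωfol : IsFoliationForm U
      (fun x m => ∑ i : Fin n, b i x * ωs (Fin.castLE (by omega) i) x m)) :
    TotallyGeodesic U Γ
        (fun x m => ∑ i : Fin n, b i x * ωs (Fin.castLE (by omega) i) x m) ↔
      ∀ i j, i ≠ j → ∀ x ∈ U, sInv X a i j x = sInv X b i j x := by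
  exact statement12_general hU hΓ hX (fun _ => (hweb.1 _).1.of_le (by simp)) (fun _ => hg _)
    ((hg ⟨n, by omega⟩).of_eq_neg hnorm1) (fun i => (hasm i).of_le (by simp)) hanz hane
    ((hg ⟨n + 1, by omega⟩).of_eq_neg hnorm2) (fun i => (hbsm i).of_le (by simp)) hbnz hbne
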